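/- Consider the labeled stochastic block model 𝒢(n, a/n, b/n, μ, ν) with true type assignment σ* and a weight function w : 𝓛 → [−1,1]. Assume the technical condition Σ_ℓ w(ℓ)²·(a·μ(ℓ) + b·ν(ℓ)) > 8·ln 2, and assume Σ_ℓ (a·μ(ℓ) − b·ν(ℓ))·w(ℓ) / √(Σ_ℓ (a·μ(ℓ) + b·ν(ℓ))·w(ℓ)²) > 512·√(ln 2). Let Ŷ be any maximizer of ⟨W, Y⟩ over the set {Y : Y positive semidefinite, Y_{uu} = 1 for all u ∈ [n], ⟨J, Y⟩ = 0}, where J is the all-one matrix, and let y be any eigenvector of Ŷ corresponding to its largest eigenvalue, normalized so that ‖y‖ = √n. Then asymptotically almost surely Q(σ*, sign(y)) > 0, where sign(y) ∈ {±1}^n takes the componentwise sign of y. -/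

import Mathlib

open Finset Filter Real

namespace LSBM

/-- Ordered pairs `u < v` of vertices. -/
abbrev Pairs (n : ℕ) := {p : Fin n × Fin n // p.1 < p.2}

/-- A labeled-graph configuration: each pair `u < v` carries `none` (no edge)
or `some ℓ` (an edge with label `ℓ`). -/
abbrev EdgeConf (n : ℕ) (L : Type*) := Pairs n → Option L

variable {L : Type*}

/-- The label (if any) on the edge between `u` and `v`. -/
def getLabel {n : ℕ} (E : EdgeConf n L) (u v : Fin n) : Option L :=
  if h : u < v then E ⟨(u, v), h⟩ else if h' : v < u then E ⟨(v, u), h'⟩ else none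

/-- Per-pair mass under the labeled stochastic block model. -/
noncomputable def sbmPairMass (n : ℕ) (a b : ℝ) (μ ν : L → ℝ) (same : Bool) : Option L → ℝ
  | none => if same then 1 - a / n else 1 - b / n
  | some ℓ => if same then (a / n) * μ ℓ else (b / n) * ν ℓ

/-- Joint mass of a (type assignment, labeled graph) outcome under the labeled SBM. -/
noncomputable def sbmMass (n : ℕ) (a b : ℝ) (μ ν : L → ℝ)
    (x : (Fin n → Bool) × EdgeConf n L) : ℝ :=
  (1 / 2 : ℝ) ^ n *
    ∏ p : Pairs n, sbmPairMass n a b μ ν (x.1 p.1.1 == x.1 p.1.2) (x.2 p)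

/-- Probability of an event under the labeled SBM (joint in types and graph). -/
noncomputable def sbmProb [Fintype L] (n : ℕ) (a b : ℝ) (μ ν : L → ℝ)
    (A : Set ((Fin n → Bool) × EdgeConf n L)) : ℝ :=
  ∑ x : (Fin n → Bool) × EdgeConf n L, A.indicator (sbmMass n a b μ ν) x

/-- Probability of a labeled-graph event under the labeled SBM (marginal over types). -/
noncomputable def sbmGraphProb [Fintype L] (n : ℕ) (a b : ℝ) (μ ν : L → ℝ)
    (A : Set (EdgeConf n L)) : ℝ :=
  sbmProb n a b μ ν {x | x.2 ∈ A}

/-- Conditional (given the type assignment `σ`) probability of a labeled-graph event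
under the labeled SBM. -/
noncomputable def sbmCondProb [Fintype L] (n : ℕ) (a b : ℝ) (μ ν : L → ℝ)
    (σ : Fin n → Bool) (A : Set (EdgeConf n L)) : ℝ :=
  ∑ E : EdgeConf n L, A.indicator
    (fun E' => ∏ p : Pairs n, sbmPairMass n a b μ ν (σ p.1.1 == σ p.1.2) (E' p)) E

/-- Conditional (given `σ`) expectation of a function of the labeled graph. -/
noncomputable def sbmCondExp [Fintype L] (n : ℕ) (a b : ℝ) (μ ν : L → ℝ)
    (σ : Fin n → Bool) (f : EdgeConf n L → ℝ) : ℝ :=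
  ∑ E : EdgeConf n L,
    (∏ p : Pairs n, sbmPairMass n a b μ ν (σ p.1.1 == σ p.1.2) (E p)) * f E

/-- Per-pair mass under the labeled Erdős–Rényi model. -/
noncomputable def erPairMass (n : ℕ) (a b : ℝ) (μ ν : L → ℝ) : Option L → ℝ
  | none => 1 - (a + b) / (2 * n)
  | some ℓ => ((a + b) / (2 * n)) * ((a * μ ℓ + b * ν ℓ) / (a + b))

/-- Mass of a labeled graph under the labeled Erdős–Rényi model. -/
noncomputable def erMass [Fintype L] (n : ℕ) (a b : ℝ) (μ ν : L → ℝ) (E : EdgeConf n L) : ℝ :=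
  ∏ p : Pairs n, erPairMass n a b μ ν (E p)

/-- Probability of a labeled-graph event under the labeled Erdős–Rényi model. -/
noncomputable def erProb [Fintype L] (n : ℕ) (a b : ℝ) (μ ν : L → ℝ)
    (A : Set (EdgeConf n L)) : ℝ :=
  ∑ E : EdgeConf n L, A.indicator (erMass n a b μ ν) E

/-- Expectation of a function of the labeled graph under the labeled Erdős–Rényi model. -/
noncomputable def erExp [Fintype L] (n : ℕ) (a b : ℝ) (μ ν : L → ℝ)
    (f : EdgeConf n L → ℝ) : ℝ :=
  ∑ E : EdgeConf n L, erMass n a b μ ν E * f E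

/-- `μ` is a probability distribution on the (finite) label set. -/
def IsProbVec [Fintype L] (μ : L → ℝ) : Prop := (∀ ℓ, 0 ≤ μ ℓ) ∧ ∑ ℓ, μ ℓ = 1

/-- The reconstruction-threshold parameter `τ`. -/
noncomputable def tau [Fintype L] (a b : ℝ) (μ ν : L → ℝ) : ℝ :=
  ∑ ℓ, (a * μ ℓ - b * ν ℓ) ^ 2 / (2 * (a * μ ℓ + b * ν ℓ))

/-- The weighted adjacency matrix `W` with `W u v = A u v * w (L u v)`. -/
def Wmat {n : ℕ} (w : L → ℝ) (E : EdgeConf n L) : Matrix (Fin n) (Fin n) ℝ :=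
  fun u v => match getLabel E u v with
    | none => 0
    | some ℓ => w ℓ

/-- The ±1 vector associated with a Boolean type assignment (`true ↦ +1`). -/
def signVec {n : ℕ} (σ : Fin n → Bool) : Fin n → ℝ := fun u => if σ u then 1 else -1

/-- `x` is a vector with entries in `{±1}`. -/
def IsSignVec {n : ℕ} (x : Fin n → ℝ) : Prop := ∀ u, x u = 1 ∨ x u = -1

/-- Componentwise sign of a real vector. -/
noncomputable def signR {n : ℕ} (x : Fin n → ℝ) : Fin n → ℝ :=
  fun u => if 0 ≤ x u then 1 else -1

open Classical in
/-- Hamming distance between two vectors. -/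
noncomputable def hamming {n : ℕ} (x y : Fin n → ℝ) : ℕ :=
  (univ.filter fun u => x u ≠ y u).card

/-- The overlap `Q(x, y) = 1/2 - (1/n) min(d(x,y), d(x,-y))`. -/
noncomputable def overlap (n : ℕ) (x y : Fin n → ℝ) : ℝ :=
  1 / 2 - (1 / n) * min (hamming x y : ℝ) (hamming x (-y) : ℝ)

open Classical in
/-- The weight of the cut induced by a ±1 assignment `σ`:
`∑_{(u,v) : u < v, σ_u ≠ σ_v} W_{uv}`. -/
noncomputable def cutWeight {n : ℕ} (w : L → ℝ) (E : EdgeConf n L) (σ : Fin n → ℝ) : ℝ :=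
  ∑ p : Pairs n, if σ p.1.1 ≠ σ p.1.2 then Wmat w E p.1.1 p.1.2 else 0

/-- The quadratic form `xᵀ M x`. -/
def quadForm {n : ℕ} (M : Matrix (Fin n) (Fin n) ℝ) (x : Fin n → ℝ) : ℝ :=
  ∑ u, ∑ v, x u * M u v * x v

/-- The entrywise inner product `⟨A, B⟩ = ∑_{u,v} A u v * B u v`. -/
def mInner {n : ℕ} (A B : Matrix (Fin n) (Fin n) ℝ) : ℝ :=
  ∑ u, ∑ v, A u v * B u v

/-- The degree of a vertex. -/
def degree {n : ℕ} (E : EdgeConf n L) (u : Fin n) : ℕ :=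
  (univ.filter fun v => (getLabel E u v).isSome).card

open Classical in
/-- The weighted adjacency matrix of the graph obtained by removing all edges incident
to vertices of degree larger than `(3/2)·(a+b)/2`. -/
noncomputable def prunedW {n : ℕ} (a b : ℝ) (w : L → ℝ) (E : EdgeConf n L) :
    Matrix (Fin n) (Fin n) ℝ :=
  fun u v =>
    if (degree E u : ℝ) ≤ (3 / 2) * ((a + b) / 2) ∧
       (degree E v : ℝ) ≤ (3 / 2) * ((a + b) / 2)
    then Wmat w E u v else 0

/-- The conditional (given `σ`) entrywise expectation `E[W | σ]` of the weighted
adjacency matrix. -/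
noncomputable def condEW {n : ℕ} [Fintype L] (a b : ℝ) (μ ν w : L → ℝ)
    (σ : Fin n → Bool) : Matrix (Fin n) (Fin n) ℝ :=
  fun u v =>
    if u = v then 0
    else if σ u = σ v then (a / n) * ∑ ℓ, μ ℓ * w ℓ
    else (b / n) * ∑ ℓ, ν ℓ * w ℓ

/-- The matrix `D' = W' - (α/n) J` used in the spectral method, where
`α = (1/2)·∑_ℓ w(ℓ)(aμ(ℓ)+bν(ℓ))` and `J` is the all-one matrix. -/
noncomputable def Dmat {n : ℕ} [Fintype L] (a b : ℝ) (μ ν w : L → ℝ)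
    (E : EdgeConf n L) : Matrix (Fin n) (Fin n) ℝ :=
  fun u v => prunedW a b w E u v - ((1 / 2) * ∑ ℓ, w ℓ * (a * μ ℓ + b * ν ℓ)) / n

/-- The spectral norm (ℓ²-operator norm) of a real square matrix. -/
noncomputable def specNorm {n : ℕ} (M : Matrix (Fin n) (Fin n) ℝ) : ℝ :=
  ‖Matrix.toEuclideanCLM (𝕜 := ℝ) M‖

/-- The number of `k`-cycles carrying the label sequence `ℓ`, in the canonical
orientation: starting from the minimal-index vertex of the cycle toward its
neighbor of smaller index. -/
def cycleCount [DecidableEq L] (n k : ℕ) (E : EdgeConf n L) (ℓ : Fin k → L) : ℕ :=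
  if hk : 0 < k then
    haveI : NeZero k := ⟨hk.ne'⟩
    (univ.filter fun c : Fin k → Fin n =>
      Function.Injective c ∧ (∀ i, c 0 ≤ c i) ∧
      c 1 < c ⟨k - 1, Nat.sub_lt hk one_pos⟩ ∧
      ∀ i : Fin k, getLabel E (c i) (c (i + 1)) = some (ℓ i)).card
  else 0

/-- The Poisson probability mass function. -/
noncomputable def poissonPMF (m : ℝ) (j : ℕ) : ℝ :=
  Real.exp (-m) * m ^ j / (Nat.factorial j)

/-- The mean cycle count `λ([ℓ]_k)` under the labeled Erdős–Rényi model. -/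
noncomputable def lamER [Fintype L] (a b : ℝ) (μ ν : L → ℝ) {k : ℕ} (ℓ : Fin k → L) : ℝ :=
  (1 / ((2 : ℝ) ^ (k + 1) * k)) * ∏ i, (a * μ (ℓ i) + b * ν (ℓ i))

/-- The mean cycle count `ξ([ℓ]_k)` under the labeled SBM. -/
noncomputable def xiSBM [Fintype L] (a b : ℝ) (μ ν : L → ℝ) {k : ℕ} (ℓ : Fin k → L) : ℝ :=
  (1 / ((2 : ℝ) ^ (k + 1) * k)) *
    (∏ i, (a * μ (ℓ i) + b * ν (ℓ i)) + ∏ i, (a * μ (ℓ i) - b * ν (ℓ i)))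

/-- The per-pair likelihood-ratio factor `W_{uv}(G, L, σ)` (SBM versus labeled
Erdős–Rényi), as a function of the pair status (`same` type or not) and the
edge/label information on the pair. -/
noncomputable def likPair (n : ℕ) (a b : ℝ) (μ ν : L → ℝ) (same : Bool) :
    Option L → ℝ
  | some ℓ =>
      if same then 2 * a * μ ℓ / (a * μ ℓ + b * ν ℓ)
      else 2 * b * ν ℓ / (a * μ ℓ + b * ν ℓ)
  | none =>
      if same then (1 - a / n) / (1 - (a + b) / (2 * n))
      else (1 - b / n) / (1 - (a + b) / (2 * n))

/-- The likelihood ratio `Y_n = ℙ_n / ℙ'_n` of the labeled SBM with respect to the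
labeled Erdős–Rényi model. -/
noncomputable def Ylik [Fintype L] (n : ℕ) (a b : ℝ) (μ ν : L → ℝ)
    (E : EdgeConf n L) : ℝ :=
  (1 / 2 : ℝ) ^ n * ∑ σ : Fin n → Bool,
    ∏ p : Pairs n, likPair n a b μ ν (σ p.1.1 == σ p.1.2) (E p)


noncomputable def sg (b : Bool) : ℝ := if b then 1 else -1

noncomputable def rad {k : ℕ} (u : Fin k → ℝ) (e : Fin k → Bool) : ℝ := ∑ i, u i * sg (e i)

lemma sum_cons {k : ℕ} (f : (Fin (k+1) → Bool) → ℝ) :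
    ∑ e, f e = ∑ e : Fin k → Bool, (f (Fin.cons true e) + f (Fin.cons false e)) := by
  rw [← (Fin.consEquiv (fun _ => Bool)).sum_comp, Fintype.sum_prod_type]
  simp [Fin.consEquiv, Finset.sum_add_distrib]

lemma rad_cons {k : ℕ} (u : Fin (k+1) → ℝ) (b : Bool) (e : Fin k → Bool) :
    rad u (Fin.cons b e) = u 0 * sg b + rad (fun i => u i.succ) e := by
  simp [rad, Fin.sum_univ_succ]

lemma rad_mul (k : ℕ) : ∀ (u v : Fin k → ℝ),
    ∑ e, rad u e * rad v e = 2 ^ k * ∑ i, u i * v i := by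
  induction k with
  | zero => intro u v; simp [rad]
  | succ k ih =>
    intro u v
    rw [sum_cons, Fin.sum_univ_succ]
    have := ih (fun i => u i.succ) (fun i => v i.succ)
    have h2 : ∀ e : Fin k → Bool, rad u (Fin.cons true e) * rad v (Fin.cons true e) +
        rad u (Fin.cons false e) * rad v (Fin.cons false e) =
        2 * (u 0 * v 0) + 2 * (rad (fun i => u i.succ) e * rad (fun i => v i.succ) e) := by
      intro e
      simp only [rad_cons, sg]
      simp
      ring
    simp only [h2, Finset.sum_add_distrib, ← Finset.mul_sum, this]
    simp
    ring

lemma rad_four (k : ℕ) : ∀ (u : Fin k → ℝ),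
    ∑ e, rad u e ^ 4 ≤ 3 * 2 ^ k * (∑ i, u i ^ 2) ^ 2 := by
  induction k with
  | zero => intro u; simp [rad]
  | succ k ih =>
    intro u
    rw [sum_cons, Fin.sum_univ_succ]
    have h4 := ih (fun i => u i.succ)
    have h2' := rad_mul k (fun i => u i.succ) (fun i => u i.succ)
    have h2 : ∀ e : Fin k → Bool, rad u (Fin.cons true e) ^ 4 +
        rad u (Fin.cons false e) ^ 4 =
        2 * (u 0 ^ 4) + 12 * u 0 ^ 2 * (rad (fun i => u i.succ) e * rad (fun i => u i.succ) e)
          + 2 * rad (fun i => u i.succ) e ^ 4 := by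
      intro e
      simp only [rad_cons, sg]
      simp
      ring
    simp only [h2, Finset.sum_add_distrib, ← Finset.mul_sum, h2']
    simp only [← pow_two]
    set s := ∑ i : Fin k, u i.succ ^ 2
    simp
    have hp : (0:ℝ) ≤ 2 ^ k := by positivity
    rw [pow_succ (2:ℝ) k]
    nlinarith [mul_nonneg hp (sq_nonneg (u 0 ^ 2))]

noncomputable def clip (c x : ℝ) : ℝ := max (-c) (min c x)

lemma clip_abs {c : ℝ} (hc : 0 < c) (x : ℝ) : |clip c x| ≤ c := by
  unfold clip
  rw [abs_le]
  exact ⟨le_max_left _ _, max_le (by linarith) (min_le_left _ _)⟩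

lemma clip_sq {c : ℝ} (hc : 0 < c) (x : ℝ) : clip c x ^ 2 ≤ x ^ 2 := by
  unfold clip
  rcases le_total c x with h | h
  · rw [min_eq_left h, max_eq_right (by linarith)]; nlinarith
  · rw [min_eq_right h]
    rcases le_total (-c) x with h' | h'
    · rw [max_eq_right h']
    · rw [max_eq_left h']; nlinarith

lemma clip_res {c : ℝ} (hc : 0 < c) (x : ℝ) : 16 * c ^ 2 * (x - clip c x) ^ 2 ≤ x ^ 4 := by
  unfold clip
  rcases le_total c x with h | h
  · rw [min_eq_left h, max_eq_right (by linarith)]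
    have h1 : 4 * c * (x - c) ≤ x ^ 2 := by nlinarith [sq_nonneg (x - 2 * c)]
    have h0 : 0 ≤ 4 * c * (x - c) := mul_nonneg (by linarith) (by linarith)
    nlinarith [mul_self_le_mul_self h0 h1]
  · rw [min_eq_right h]
    rcases le_total (-c) x with h' | h'
    · rw [max_eq_right h']; simp; positivity
    · rw [max_eq_left h']
      have h1 : 4 * c * (-x - c) ≤ x ^ 2 := by nlinarith [sq_nonneg (x + 2 * c)]
      have h0 : 0 ≤ 4 * c * (-x - c) := mul_nonneg (by linarith) (by linarith)
      nlinarith [mul_self_le_mul_self h0 h1]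

/-- vertex bound extends to the cube -/
lemma abs_eq_sg (z : ℝ) : |z| = sg (decide (0 ≤ z)) * z := by
  unfold sg
  by_cases h : 0 ≤ z
  · simp [h, abs_of_nonneg]
  · simp [h, abs_of_neg (not_le.mp h)]

lemma lin_ext {n : ℕ} (z s : Fin n → ℝ) (c : ℝ) (hs : ∀ i, |s i| ≤ c) :
    ∑ i, s i * z i ≤ c * ∑ i, sg (decide (0 ≤ z i)) * z i := by
  rw [Finset.mul_sum]
  apply Finset.sum_le_sum
  intro i _
  rw [← abs_eq_sg]
  calc s i * z i ≤ |s i * z i| := le_abs_self _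
    _ = |s i| * |z i| := abs_mul _ _
    _ ≤ _ := mul_le_mul_of_nonneg_right (hs i) (abs_nonneg _)

lemma cube_ext {n : ℕ} (M : Matrix (Fin n) (Fin n) ℝ) (B c : ℝ) (hc : 0 < c)
    (hB : ∀ x y : Fin n → Bool, ∑ i, ∑ j, sg (x i) * M i j * sg (y j) ≤ B)
    (s t : Fin n → ℝ) (hs : ∀ i, |s i| ≤ c) (ht : ∀ i, |t i| ≤ c) :
    ∑ i, ∑ j, M i j * (s i * t j) ≤ c ^ 2 * B := by
  have h1 := lin_ext (fun i => ∑ j, M i j * t j) s c hs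
  set x : Fin n → Bool := fun i => decide (0 ≤ ∑ j, M i j * t j) with hx
  have h2 := lin_ext (fun j => ∑ i, sg (x i) * M i j) t c ht
  set y : Fin n → Bool := fun j => decide (0 ≤ ∑ i, sg (x i) * M i j) with hy
  have h3 := hB x y
  have e1 : ∑ i, s i * ∑ j, M i j * t j = ∑ i, ∑ j, M i j * (s i * t j) := by
    simp only [Finset.mul_sum]
    refine Finset.sum_congr rfl fun i _ => Finset.sum_congr rfl fun j _ => by ring
  have e2 : ∑ i, sg (x i) * ∑ j, M i j * t j = ∑ j, t j * ∑ i, sg (x i) * M i j := by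
    simp only [Finset.mul_sum]
    rw [Finset.sum_comm]
    refine Finset.sum_congr rfl fun i _ => Finset.sum_congr rfl fun j _ => by ring
  have e3 : ∑ j, sg (y j) * ∑ i, sg (x i) * M i j = ∑ i, ∑ j, sg (x i) * M i j * sg (y j) := by
    simp only [Finset.mul_sum]
    rw [Finset.sum_comm]
    refine Finset.sum_congr rfl fun i _ => Finset.sum_congr rfl fun j _ => by ring
  have h4 : c * (∑ i, sg (x i) * ∑ j, M i j * t j) ≤ c * (c * B) := by
    apply mul_le_mul_of_nonneg_left _ hc.le
    rw [e2]
    refine h2.trans ?_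
    apply mul_le_mul_of_nonneg_left _ hc.le
    show ∑ j, sg (y j) * ∑ i, sg (x i) * M i j ≤ B
    rw [e3]; exact h3
  rw [← e1]
  refine h1.trans (h4.trans (by ring_nf; rfl))

/-- Property P. -/
def GB {n : ℕ} (M : Matrix (Fin n) (Fin n) ℝ) (K : ℝ) : Prop :=
  ∀ (k : ℕ) (u v : Fin n → Fin k → ℝ), (∀ i, ∑ l, u i l ^ 2 ≤ 1) → (∀ i, ∑ l, v i l ^ 2 ≤ 1) →
    ∑ i, ∑ j, M i j * ∑ l, u i l * v j l ≤ K

lemma GB_fin {n : ℕ} {M : Matrix (Fin n) (Fin n) ℝ} {K : ℝ} (h : GB M K)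
    {ι : Type} [Fintype ι] (N : ℝ) (hN : 0 < N) (f g : Fin n → ι → ℝ)
    (hf : ∀ i, ∑ l, f i l ^ 2 ≤ N) (hg : ∀ i, ∑ l, g i l ^ 2 ≤ N) :
    ∑ i, ∑ j, M i j * ∑ l, f i l * g j l ≤ N * K := by
  set φ := (Fintype.equivFin ι).symm
  have key : ∀ q : ι → ℝ, ∑ l, q (φ l) = ∑ l, q l := fun q => φ.sum_comp q
  have hs : (Real.sqrt N)^2 = N := Real.sq_sqrt hN.le
  have hsp : 0 < Real.sqrt N := Real.sqrt_pos.mpr hN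
  have := h _ (fun i l => f i (φ l) / Real.sqrt N) (fun i l => g i (φ l) / Real.sqrt N) ?_ ?_
  · have e : ∀ i j, ∑ l, f i (φ l) / Real.sqrt N * (g j (φ l) / Real.sqrt N)
        = (∑ l, f i l * g j l) / N := by
      intro i j
      rw [← key, Finset.sum_div]
      refine Finset.sum_congr rfl fun l _ => ?_
      rw [div_mul_div_comm, ← pow_two, hs]
    simp only [e] at this
    have e2 : ∑ i, ∑ j, M i j * ((∑ l, f i l * g j l) / N) =
      (∑ i, ∑ j, M i j * (∑ l, f i l * g j l)) / N := by
      simp only [Finset.sum_div, mul_div_assoc]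
    rw [e2, div_le_iff₀ hN] at this
    linarith
  · intro i
    simp only [div_pow, hs]
    rw [← Finset.sum_div, key (fun l => f i l ^ 2), div_le_one hN]
    exact hf i
  · intro i
    simp only [div_pow, hs]
    rw [← Finset.sum_div, key (fun l => g i l ^ 2), div_le_one hN]
    exact hg i

lemma GB_step {n : ℕ} {M : Matrix (Fin n) (Fin n) ℝ} {K B : ℝ} (h : GB M K)
    (hB : ∀ x y : Fin n → Bool, ∑ i, ∑ j, sg (x i) * M i j * sg (y j) ≤ B) :
    GB M (1.69 * B + 2 / 3 * K) := by
  intro k u v hu hv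
  have hN : (0:ℝ) < 2 ^ k := by positivity
  have hc : (0:ℝ) < 1.3 := by norm_num
  have sqb : ∀ w : Fin k → ℝ, ∑ l, w l ^ 2 ≤ 1 → ∑ e, rad w e ^ 2 ≤ 2 ^ k := by
    intro w hw
    simp only [pow_two (rad _ _)]
    rw [rad_mul]
    simp only [← pow_two]
    nlinarith
  have clb : ∀ w : Fin k → ℝ, ∑ l, w l ^ 2 ≤ 1 → ∑ e, clip 1.3 (rad w e) ^ 2 ≤ 2 ^ k := by
    intro w hw
    exact (Finset.sum_le_sum fun e _ => clip_sq hc _).trans (sqb w hw)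
  have rsb : ∀ w : Fin k → ℝ, ∑ l, w l ^ 2 ≤ 1 →
      ∑ e, (3 * (rad w e - clip 1.3 (rad w e))) ^ 2 ≤ 2 ^ k := by
    intro w hw
    have h4 := rad_four k w
    have h5 : ∑ e, (3 * (rad w e - clip 1.3 (rad w e))) ^ 2 ≤ ∑ e, (1/3) * rad w e ^ 4 := by
      apply Finset.sum_le_sum
      intro e _
      have := clip_res hc (rad w e)
      nlinarith [sq_nonneg (rad w e - clip 1.3 (rad w e))]
    rw [← Finset.mul_sum] at h5
    have h0 : 0 ≤ ∑ l, w l ^ 2 := Finset.sum_nonneg fun _ _ => sq_nonneg _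
    have : (∑ l, w l ^ 2) ^ 2 ≤ 1 := by nlinarith
    nlinarith
  have t1 := GB_fin h (2 ^ k) hN (fun i => fun e => clip 1.3 (rad (u i) e))
    (fun i e => 3 * (rad (v i) e - clip 1.3 (rad (v i) e))) (fun i => clb _ (hu i)) (fun i => rsb _ (hv i))
  have t2 := GB_fin h (2 ^ k) hN
    (fun i e => 3 * (rad (u i) e - clip 1.3 (rad (u i) e))) (fun i e => rad (v i) e)
    (fun i => rsb _ (hu i)) (fun i => sqb _ (hv i))
  have t3 : ∑ i, ∑ j, M i j * ∑ e : Fin k → Bool, clip 1.3 (rad (u i) e) * clip 1.3 (rad (v j) e)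
      ≤ 2 ^ k * (1.3 ^ 2 * B) := by
    have : ∑ i, ∑ j, M i j * ∑ e : Fin k → Bool, clip 1.3 (rad (u i) e) * clip 1.3 (rad (v j) e)
      = ∑ e : Fin k → Bool, ∑ i, ∑ j, M i j * (clip 1.3 (rad (u i) e) * clip 1.3 (rad (v j) e)) := by
      symm
      rw [Finset.sum_comm]
      refine Finset.sum_congr rfl fun i _ => ?_
      rw [Finset.sum_comm]
      refine Finset.sum_congr rfl fun j _ => ?_
      rw [Finset.mul_sum]
    rw [this]
    calc _ ≤ ∑ e : Fin k → Bool, 1.3 ^ 2 * B := by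
          apply Finset.sum_le_sum
          intro e _
          exact cube_ext M B 1.3 hc hB _ _ (fun i => clip_abs hc _) (fun i => clip_abs hc _)
      _ = _ := by simp
  have e : 2 ^ k * ∑ i, ∑ j, M i j * ∑ l, u i l * v j l =
     (∑ i, ∑ j, M i j * ∑ e : Fin k → Bool, clip 1.3 (rad (u i) e) * clip 1.3 (rad (v j) e))
     + (1/3) * (∑ i, ∑ j, M i j * ∑ e : Fin k → Bool, clip 1.3 (rad (u i) e) *
        (3 * (rad (v j) e - clip 1.3 (rad (v j) e))))
     + (1/3) * (∑ i, ∑ j, M i j * ∑ e : Fin k → Bool, (3 * (rad (u i) e - clip 1.3 (rad (u i) e)))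
        * rad (v j) e) := by
    simp only [Finset.mul_sum (s := (univ : Finset (Fin n))), ← Finset.sum_add_distrib]
    refine Finset.sum_congr rfl fun i _ => Finset.sum_congr rfl fun j _ => ?_
    have := rad_mul k (u i) (v j)
    rw [mul_left_comm, ← this]
    rw [mul_left_comm (1/3 : ℝ), mul_left_comm (1/3 : ℝ), ← mul_add, ← mul_add]
    congr 1
    rw [Finset.mul_sum, Finset.mul_sum, ← Finset.sum_add_distrib, ← Finset.sum_add_distrib]
    refine Finset.sum_congr rfl fun e _ => ?_
    ring
  have fin : 2 ^ k * (∑ i, ∑ j, M i j * ∑ l, u i l * v j l) ≤ 2 ^ k * (1.69 * B + 2 / 3 * K) := by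
    rw [e]
    linarith
  exact le_of_mul_le_mul_left fin hN

lemma GB_zero {n : ℕ} (M : Matrix (Fin n) (Fin n) ℝ) : GB M (∑ i, ∑ j, |M i j|) := by
  intro k u v hu hv
  refine Finset.sum_le_sum fun i _ => Finset.sum_le_sum fun j _ => ?_
  have h1 : |∑ l, u i l * v j l| ≤ 1 := by
    refine abs_le_of_sq_le_sq ?_ zero_le_one
    calc _ ≤ _ := Finset.sum_mul_sq_le_sq_mul_sq _ _ _
      _ ≤ 1 * 1 := mul_le_mul (hu i) (hv j) (Finset.sum_nonneg fun _ _ => sq_nonneg _) zero_le_one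
      _ = 1 ^ 2 := by ring
  calc _ ≤ |M i j * ∑ l, u i l * v j l| := le_abs_self _
    _ = |M i j| * |∑ l, u i l * v j l| := abs_mul _ _
    _ ≤ |M i j| * 1 := mul_le_mul_of_nonneg_left h1 (abs_nonneg _)
    _ = _ := mul_one _

/-- Grothendieck's inequality with constant 5.07. -/
lemma grothendieck {n : ℕ} {M : Matrix (Fin n) (Fin n) ℝ} {B : ℝ}
    (hB : ∀ x y : Fin n → Bool, ∑ i, ∑ j, sg (x i) * M i j * sg (y j) ≤ B) :
    GB M (5.07 * B) := by
  set A := ∑ i, ∑ j, |M i j|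
  have hP : ∀ m : ℕ, GB M (5.07 * B + (2/3) ^ m * (A - 5.07 * B)) := by
    intro m
    induction m with
    | zero => simpa using GB_zero M
    | succ m ih =>
      have := GB_step ih hB
      convert this using 1
      ring
  intro k u v hu hv
  have lim : Tendsto (fun m : ℕ => 5.07 * B + (2/3 : ℝ) ^ m * (A - 5.07 * B)) atTop
      (nhds (5.07 * B + 0 * (A - 5.07 * B))) :=
    ((tendsto_pow_atTop_nhds_zero_of_lt_one (by norm_num) (by norm_num)).mul_const _).const_add _
  have := ge_of_tendsto' lim (fun m => hP m k u v hu hv)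
  simpa using this

lemma psd_gram {n : ℕ} {Y : Matrix (Fin n) (Fin n) ℝ} (hY : Y.PosSemidef) :
    ∃ (m : ℕ) (B : Fin m → Fin n → ℝ), ∀ u v, Y u v = ∑ k, B k u * B k v := by
  obtain ⟨m, B, hB⟩ := Matrix.posSemidef_iff_eq_sum_vecMulVec.mp hY
  refine ⟨m, B, fun u v => ?_⟩
  rw [hB, Matrix.sum_apply]
  simp [Matrix.vecMulVec_apply]

lemma psd_trace {n : ℕ} {Y : Matrix (Fin n) (Fin n) ℝ} (hY : Y.PosSemidef) (x : Fin n → ℝ) :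
    x ⬝ᵥ Y.mulVec x ≤ Y.trace * (x ⬝ᵥ x) := by
  obtain ⟨m, B, hB⟩ := psd_gram hY
  have e1 : x ⬝ᵥ Y.mulVec x = ∑ k, (∑ u, B k u * x u) ^ 2 := by
    simp only [dotProduct, Matrix.mulVec, hB, Finset.mul_sum, Finset.sum_mul, pow_two]
    have : ∀ k, (∑ i, ∑ j, B k j * x j * (B k i * x i)) = ∑ i, ∑ j, x i * (B k i * B k j * x j) :=
      fun k => Finset.sum_congr rfl fun i _ => Finset.sum_congr rfl fun j _ => by ring
    simp only [this]
    symm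
    rw [Finset.sum_comm]
    refine Finset.sum_congr rfl fun i _ => ?_
    rw [Finset.sum_comm]
  have e2 : Y.trace = ∑ k, ∑ u, B k u ^ 2 := by
    rw [Finset.sum_comm]
    simp [Matrix.trace, hB, pow_two]
  rw [e1, e2, Finset.sum_mul]
  refine Finset.sum_le_sum fun k _ => ?_
  have := Finset.sum_mul_sq_le_sq_mul_sq univ (B k) x
  simpa [dotProduct, pow_two] using this

lemma psd_top {n : ℕ} {Y : Matrix (Fin n) (Fin n) ℝ} (hY : Y.PosSemidef) (lam : ℝ)
    (hl : ∀ (lam' : ℝ) (z : Fin n → ℝ), z ≠ 0 → Y.mulVec z = lam' • z → lam' ≤ lam)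
    (x : Fin n → ℝ) : x ⬝ᵥ Y.mulVec x ≤ lam * (x ⬝ᵥ x) := by
  have hH : (lam • (1 : Matrix (Fin n) (Fin n) ℝ) - Y).IsHermitian := by
    refine Matrix.IsHermitian.sub ?_ hY.1
    simp [Matrix.IsHermitian]
  have hP : (lam • (1 : Matrix (Fin n) (Fin n) ℝ) - Y).PosSemidef := by
    rw [hH.posSemidef_iff_eigenvalues_nonneg]
    intro i
    have h1 := hH.mulVec_eigenvectorBasis i
    set z := hH.eigenvectorBasis i
    set e := hH.eigenvalues i
    have hz : (⇑z : Fin n → ℝ) ≠ 0 := by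
      intro h0
      have : ‖z‖ = 1 := hH.eigenvectorBasis.orthonormal.1 i
      have hz0 : z = 0 := by
        ext j; simpa using congrFun h0 j
      rw [hz0] at this
      simp at this
    have := hl (lam - e) z hz (by
      rw [sub_smul, ← h1, Matrix.sub_mulVec, Matrix.smul_mulVec, Matrix.one_mulVec]
      abel)
    show 0 ≤ e
    linarith
  have := (Matrix.posSemidef_iff_dotProduct_mulVec.mp hP).2 x
  rw [Matrix.sub_mulVec, Matrix.smul_mulVec, Matrix.one_mulVec, dotProduct_sub,
    dotProduct_smul] at this
  simp at this
  linarith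

lemma spectral_part {n : ℕ} (hn : 0 < n) {Y : Matrix (Fin n) (Fin n) ℝ} (hY : Y.PosSemidef)
    (hd : ∀ u, Y u u = 1) (s y : Fin n → ℝ) (lam : ℝ)
    (hs : s ⬝ᵥ s = n) (hy : y ⬝ᵥ y = n) (he : Y.mulVec y = lam • y)
    (hl : ∀ (lam' : ℝ) (z : Fin n → ℝ), z ≠ 0 → Y.mulVec z = lam' • z → lam' ≤ lam)
    (hq : 3 / 4 * (n : ℝ) ^ 2 ≤ s ⬝ᵥ Y.mulVec s) :
    (n : ℝ) ^ 2 / 2 < (s ⬝ᵥ y) ^ 2 := by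
  have hn' : (0:ℝ) < n := by exact_mod_cast hn
  have h1 : 3 / 4 * (n:ℝ) ≤ lam := by
    have := psd_top hY lam hl s
    rw [hs] at this
    have h2 : (3 / 4 * (n:ℝ)) * n ≤ lam * n := by nlinarith
    exact le_of_mul_le_mul_right h2 hn'
  have hsym : ∀ z w : Fin n → ℝ, z ⬝ᵥ Y.mulVec w = w ⬝ᵥ Y.mulVec z := by
    intro z w
    have : Y.transpose = Y := by simpa [Matrix.IsHermitian] using hY.1
    rw [Matrix.dotProduct_mulVec, dotProduct_comm, ← Matrix.mulVec_transpose, this]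
  set P := Y - (lam / n) • Matrix.vecMulVec y y with hP
  have hPq : ∀ z : Fin n → ℝ, z ⬝ᵥ P.mulVec z = z ⬝ᵥ Y.mulVec z - lam / n * (z ⬝ᵥ y) ^ 2 := by
    intro z
    rw [hP, Matrix.sub_mulVec, Matrix.smul_mulVec, dotProduct_sub, dotProduct_smul,
      Matrix.vecMulVec_mulVec]
    simp only [dotProduct_smul, dotProduct_comm y z, op_smul_eq_smul, smul_eq_mul]
    ring
  have hPp : P.PosSemidef := by
    rw [Matrix.posSemidef_iff_dotProduct_mulVec]
    constructor
    · refine Matrix.IsHermitian.sub hY.1 ?_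
      ext i j
      simp [Matrix.vecMulVec_apply, mul_comm]
    · intro z
      simp only [star_trivial]
      rw [hPq]
      have := (Matrix.posSemidef_iff_dotProduct_mulVec.mp hY).2 (z - ((z ⬝ᵥ y) / n) • y)
      simp only [star_trivial, Matrix.mulVec_sub, Matrix.mulVec_smul, he, sub_dotProduct,
        dotProduct_sub, smul_dotProduct, dotProduct_smul, hy, smul_eq_mul, hsym y z] at this
      have e : z ⬝ᵥ y / n * n = z ⬝ᵥ y := by field_simp
      have e2 : lam / n * (z ⬝ᵥ y) ^ 2 = (z ⬝ᵥ y / n) * (lam * (z ⬝ᵥ y)) := by ring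
      rw [e2]
      have e3 : z ⬝ᵥ y / ↑n * (z ⬝ᵥ y / ↑n * (lam * ↑n)) = (z ⬝ᵥ y / n) * (lam * (z ⬝ᵥ y)) := by
        field_simp
      linarith
  have htr : P.trace = n - lam := by
    rw [hP, Matrix.trace_sub, Matrix.trace_smul, Matrix.trace_vecMulVec, hy]
    have : Y.trace = n := by simp [Matrix.trace, hd]
    rw [this]
    simp
    field_simp
  have h3 := psd_trace hPp s
  rw [hPq, htr, hs] at h3
  -- 3/4 n² - lam/n c² ≤ (n - lam) n
  have h4 : lam * (n ^ 2 - (s ⬝ᵥ y) ^ 2) ≤ n * (1 / 4 * (n:ℝ) ^ 2) := by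
    have e : lam / n * (s ⬝ᵥ y) ^ 2 * n = lam * (s ⬝ᵥ y) ^ 2 := by field_simp
    nlinarith
  by_contra hcon
  push Not at hcon
  have : (3 / 4 * (n:ℝ)) * (n ^ 2 / 2) ≤ lam * (n ^ 2 - (s ⬝ᵥ y) ^ 2) :=
    mul_le_mul h1 (by linarith) (by positivity) (by linarith)
  have : 0 < (n:ℝ) ^ 3 := by positivity
  nlinarith

lemma round_part {n : ℕ} (hn : 0 < n) (σ : Fin n → Bool) (y : Fin n → ℝ)
    (hy : y ⬝ᵥ y = n) (hc : (n : ℝ) ^ 2 / 2 < (signVec σ ⬝ᵥ y) ^ 2) :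
    0 < overlap n (signVec σ) (signR y) := by
  classical
  have hn' : (0:ℝ) < n := by exact_mod_cast hn
  set p : Fin n → ℝ := fun u => if signVec σ u ≠ signR y u then 1 else 0 with hp
  have h1 : (hamming (signVec σ) (signR y) : ℝ) = ∑ u, p u := by
    simp only [hamming, Finset.natCast_card_filter, hp]
  have h2 : (hamming (signVec σ) (-signR y) : ℝ) = ∑ u, (1 - p u) := by
    simp only [hamming, Finset.natCast_card_filter]
    refine Finset.sum_congr rfl fun u _ => ?_
    simp only [hp, signVec, signR, Pi.neg_apply]
    split_ifs <;> norm_num at *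
  have hsum : ∑ u, (1 - p u) = n - ∑ u, p u := by simp
  have hx : signVec σ ⬝ᵥ y = ∑ u, (1 - 2 * p u) * |y u| := by
    refine Finset.sum_congr rfl fun u _ => ?_
    simp only [hp, signVec, signR]
    by_cases h : 0 ≤ y u
    · rw [abs_of_nonneg h]; simp only [h]; split_ifs <;> norm_num at *
    · rw [abs_of_neg (not_le.mp h)]; simp only [h]; split_ifs <;> norm_num at *
  by_contra hcon
  have hmin : (n : ℝ) / 2 ≤ min (hamming (signVec σ) (signR y) : ℝ) (hamming (signVec σ) (-signR y) : ℝ) := by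
    unfold overlap at hcon
    push Not at hcon
    set m := min (hamming (signVec σ) (signR y) : ℝ) (hamming (signVec σ) (-signR y) : ℝ)
    have : 1 / 2 ≤ m / n := by rw [div_eq_mul_one_div m]; linarith
    rw [le_div_iff₀ hn'] at this
    linarith
  rw [le_min_iff, h1, h2, hsum] at hmin
  have hps : ∑ u, p u = n / 2 := by linarith [hmin.1, hmin.2]
  have hp2 : ∀ u, p u ^ 2 = p u := by
    intro u; simp only [hp]; split_ifs <;> norm_num
  have hp0 : ∀ u, 0 ≤ p u ∧ p u ≤ 1 := by
    intro u; simp only [hp]; split_ifs <;> norm_num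
  have hyy : ∑ u, |y u| ^ 2 = n := by
    rw [← hy]; simp [dotProduct, pow_two]
  have c1 := Finset.sum_mul_sq_le_sq_mul_sq univ p (fun u => |y u|)
  have c2 := Finset.sum_mul_sq_le_sq_mul_sq univ (fun u => 1 - p u) (fun u => |y u|)
  have hq2 : ∀ u, (1 - p u) ^ 2 = 1 - p u := by intro u; have := hp2 u; linarith
  simp only [hp2, hq2, hyy, hsum, hps] at c1 c2
  have hx' : signVec σ ⬝ᵥ y = ∑ u, (1 - p u) * |y u| - ∑ u, p u * |y u| := by
    rw [hx, ← Finset.sum_sub_distrib]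
    refine Finset.sum_congr rfl fun u _ => by ring
  have n1 : 0 ≤ ∑ u, (1 - p u) * |y u| :=
    Finset.sum_nonneg fun u _ => mul_nonneg (by linarith [(hp0 u).2]) (abs_nonneg _)
  have n2 : 0 ≤ ∑ u, p u * |y u| :=
    Finset.sum_nonneg fun u _ => mul_nonneg ((hp0 u).1) (abs_nonneg _)
  rw [hx'] at hc
  set A := ∑ u, (1 - p u) * |y u|
  set B := ∑ u, p u * |y u|
  rcases le_total A B with hAB | hAB
  · nlinarith [mul_nonneg n1 n2, mul_nonneg n1 (sub_nonneg.mpr hAB)]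
  · nlinarith [mul_nonneg n1 n2, mul_nonneg n2 (sub_nonneg.mpr hAB)]

lemma odd_part {n : ℕ} (hn : ¬ Even n) (σ : Fin n → Bool) (y : Fin n → ℝ) :
    0 < overlap n (signVec σ) (signR y) := by
  classical
  have hn0 : 0 < n := by
    rcases Nat.eq_zero_or_pos n with h | h
    · subst h; simp at hn
    · exact h
  have hn' : (0:ℝ) < n := by exact_mod_cast hn0
  have h2 : hamming (signVec σ) (signR y) + hamming (signVec σ) (-signR y) = n := by
    have : (hamming (signVec σ) (signR y) : ℝ) + hamming (signVec σ) (-signR y) = n := by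
      simp only [hamming, Finset.natCast_card_filter, ← Finset.sum_add_distrib]
      trans ∑ u : Fin n, (1 : ℝ)
      · refine Finset.sum_congr rfl fun u _ => ?_
        simp only [signVec, signR, Pi.neg_apply]
        split_ifs <;> norm_num at *
      · simp
    exact_mod_cast this
  set h := hamming (signVec σ) (signR y)
  set h' := hamming (signVec σ) (-signR y)
  have hm : 2 * min h h' < n := by
    by_contra hc
    push Not at hc
    apply hn
    rw [← h2]
    have : h = h' := by omega
    rw [this]; exact ⟨h', rfl⟩
  have hm' : 2 * min (h:ℝ) (h':ℝ) < n := by exact_mod_cast hm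
  unfold overlap
  have : 1 / (n:ℝ) * min (h:ℝ) (h':ℝ) < 1 / 2 := by
    rw [one_div_mul_eq_div, div_lt_iff₀ hn']; linarith
  linarith

lemma exists_bal {n : ℕ} (hn : Even n) (σ : Fin n → Bool) :
    ∃ τ : Fin n → Bool, ∑ u, signVec τ u = 0 ∧
      (n : ℝ) - |∑ u, signVec σ u| ≤ ∑ u, signVec σ u * signVec τ u := by
  classical
  obtain ⟨k, rfl⟩ := hn
  have hz : ∀ T : Finset (Fin (k + k)), #T = k →
      ∑ u, signVec (fun u => decide (u ∈ T)) u = 0 := by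
    intro T hT
    have : ∀ u, signVec (fun u => decide (u ∈ T)) u = 2 * (if u ∈ T then 1 else 0) - 1 := by
      intro u; simp only [signVec, decide_eq_true_eq]; split_ifs <;> norm_num
    simp only [this, Finset.sum_sub_distrib, ← Finset.mul_sum]
    simp [hT]
    ring
  set P : Finset (Fin (k + k)) := univ.filter fun u => σ u = true with hP
  rcases le_total k (#P) with h | h
  · obtain ⟨T, hTP, hT⟩ := Finset.exists_subset_card_eq h
    refine ⟨fun u => decide (u ∈ T), hz T hT, ?_⟩
    have h0 := hz T hT
    have h1 : ∑ u, (1 - (signVec σ u - signVec (fun u => decide (u ∈ T)) u)) ≤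
        ∑ u, signVec σ u * signVec (fun u => decide (u ∈ T)) u := by
      refine Finset.sum_le_sum fun u _ => ?_
      have : u ∈ T → σ u = true := fun hu => by simpa [hP] using hTP hu
      by_cases hu : u ∈ T
      · simp [signVec, hu, this hu]
      · simp only [signVec, hu]; split_ifs <;> norm_num at *
    simp only [Finset.sum_sub_distrib, h0] at h1
    simp at h1
    have := le_abs_self (∑ u, signVec σ u)
    push_cast at *
    linarith
  · obtain ⟨T, hTP, hT⟩ := Finset.exists_superset_card_eq h (by simp)
    refine ⟨fun u => decide (u ∈ T), hz T hT, ?_⟩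
    have h0 := hz T hT
    have h1 : ∑ u, (1 + (signVec σ u - signVec (fun u => decide (u ∈ T)) u)) ≤
        ∑ u, signVec σ u * signVec (fun u => decide (u ∈ T)) u := by
      refine Finset.sum_le_sum fun u _ => ?_
      have : σ u = true → u ∈ T := fun hu => hTP (by simpa [hP] using hu)
      by_cases hu : σ u = true
      · simp [signVec, hu, this hu]
      · simp only [signVec, hu]; split_ifs <;> norm_num at *
    simp only [Finset.sum_add_distrib, Finset.sum_sub_distrib, h0] at h1
    simp at h1
    have := neg_abs_le (∑ u, signVec σ u)
    push_cast at *
    linarith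

lemma groth_psd {n : ℕ} {M Y : Matrix (Fin n) (Fin n) ℝ} {B : ℝ}
    (hB : ∀ x y : Fin n → Bool, ∑ i, ∑ j, sg (x i) * M i j * sg (y j) ≤ B)
    (hY : Y.PosSemidef) (hd : ∀ u, Y u u = 1) : mInner M Y ≤ 5.07 * B := by
  obtain ⟨m, C, hC⟩ := psd_gram hY
  have hu : ∀ i, ∑ l, (fun i l => C l i) i l ^ 2 ≤ 1 := by
    intro i
    have := hC i i
    rw [hd] at this
    simp only [pow_two]
    exact this.symm.le
  have := grothendieck hB m (fun i l => C l i) (fun i l => C l i) hu hu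
  unfold mInner
  simp only [hC]
  exact this

lemma mInner_add {n : ℕ} (A B Y : Matrix (Fin n) (Fin n) ℝ) :
    mInner (A + B) Y = mInner A Y + mInner B Y := by
  simp [mInner, add_mul, Finset.sum_add_distrib]

lemma condEW_eq {n : ℕ} (hn : 0 < n) [Fintype L] (a b : ℝ) (μ ν w : L → ℝ)
    (σ : Fin n → Bool) (u v : Fin n) :
    condEW a b μ ν w σ u v =
      (a * (∑ ℓ, μ ℓ * w ℓ) + b * ∑ ℓ, ν ℓ * w ℓ) / (2 * n) * 1 +
      (a * (∑ ℓ, μ ℓ * w ℓ) - b * ∑ ℓ, ν ℓ * w ℓ) / (2 * n) * (signVec σ u * signVec σ v)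
      - (if u = v then a * (∑ ℓ, μ ℓ * w ℓ) / n else 0) := by
  have hn' : (n:ℝ) ≠ 0 := by positivity
  unfold condEW signVec
  by_cases h : u = v
  · subst h; cases σ u <;> simp <;> field_simp <;> ring
  · cases hu : σ u <;> cases hv : σ v <;> simp [h] <;> field_simp <;> ring

lemma mInner_condEW {n : ℕ} (hn : 0 < n) [Fintype L] (a b : ℝ) (μ ν w : L → ℝ)
    (σ : Fin n → Bool) (Y : Matrix (Fin n) (Fin n) ℝ) (hd : ∀ u, Y u u = 1)
    (hJ : mInner (fun _ _ => 1) Y = 0) :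
    mInner (condEW a b μ ν w σ) Y =
      (a * (∑ ℓ, μ ℓ * w ℓ) - b * ∑ ℓ, ν ℓ * w ℓ) / (2 * n) *
        (signVec σ ⬝ᵥ Y.mulVec (signVec σ)) - a * (∑ ℓ, μ ℓ * w ℓ) := by
  have hn' : (n:ℝ) ≠ 0 := by positivity
  unfold mInner at *
  simp only [condEW_eq hn, add_mul, sub_mul, Finset.sum_add_distrib, Finset.sum_sub_distrib,
    mul_assoc, ← Finset.mul_sum]
  have hJ0 : ∑ u, ∑ v, Y u v = 0 := by simpa using hJ
  have e1 : ∑ u, ∑ v, (if u = v then a * (∑ ℓ, μ ℓ * w ℓ) / n else 0) * Y u v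
      = a * ∑ ℓ, μ ℓ * w ℓ := by
    simp [ite_mul, hd]
    field_simp
  have e2 : ∑ u, ∑ v, signVec σ u * (signVec σ v * Y u v) = signVec σ ⬝ᵥ Y.mulVec (signVec σ) := by
    simp only [dotProduct, Matrix.mulVec, Finset.mul_sum]
    refine Finset.sum_congr rfl fun i _ => Finset.sum_congr rfl fun j _ => by ring
  simp only [Finset.mul_sum] at e1 e2 ⊢
  simp only [← e2, e1, Finset.mul_sum]
  simp
  simp only [← Finset.mul_sum, hJ0, mul_zero]

lemma det_part {n : ℕ} (hn : 0 < n) [Fintype L] (a b : ℝ) (μ ν w : L → ℝ)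
    (σ : Fin n → Bool) (E : EdgeConf n L) (r : ℝ) (hr : 0 < r)
    (hΔ : 512 * r < ∑ ℓ, (a * μ ℓ - b * ν ℓ) * w ℓ)
    (hbal : |∑ u, signVec σ u| ≤ n / 20)
    (hM : ∀ x y : Fin n → Bool, ∑ i, ∑ j, sg (x i) *
      (Wmat w E - condEW a b μ ν w σ) i j * sg (y j) ≤ 5 * n * r)
    (Y : Matrix (Fin n) (Fin n) ℝ) (hY : Y.PosSemidef) (hd : ∀ u, Y u u = 1)
    (hJ : mInner (fun _ _ => 1) Y = 0)
    (hopt : ∀ Z : Matrix (Fin n) (Fin n) ℝ,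
            Z.PosSemidef → (∀ u, Z u u = 1) → mInner (fun _ _ => 1) Z = 0 →
            mInner (Wmat w E) Z ≤ mInner (Wmat w E) Y)
    (y : Fin n → ℝ) (lam : ℝ) (he : Y.mulVec y = lam • y)
    (hl : ∀ (lam' : ℝ) (z : Fin n → ℝ), z ≠ 0 → Y.mulVec z = lam' • z → lam' ≤ lam)
    (hy : (∑ u, y u ^ 2) = n) :
    0 < overlap n (signVec σ) (signR y) := by
  by_cases hev : Even n
  swap
  · exact odd_part hev σ y
  have hn' : (0:ℝ) < n := by exact_mod_cast hn
  have hss : ∀ τ : Fin n → Bool, ∀ u, signVec τ u * signVec τ u = 1 := by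
    intro τ u; unfold signVec; split_ifs <;> norm_num
  have hy' : y ⬝ᵥ y = n := by rw [← hy]; simp [dotProduct, pow_two]
  refine round_part hn σ y hy' (spectral_part hn hY hd _ y lam ?_ hy' he hl ?_)
  · simp [dotProduct, hss]
  obtain ⟨τ, hτ0, hτ⟩ := exists_bal hev σ
  set s := signVec σ
  set t := signVec τ
  have hZ := hopt (Matrix.vecMulVec t t) ?_ ?_ ?_
  rotate_left
  · simpa using Matrix.posSemidef_vecMulVec_self_star t
  · intro u; simp [Matrix.vecMulVec_apply, t, hss]
  · simp only [mInner, Matrix.vecMulVec_apply, one_mul, ← Finset.mul_sum, hτ0]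
    simp
  have hd' : ∀ u, Matrix.vecMulVec t t u u = 1 := by
    intro u; simp [Matrix.vecMulVec_apply, t, hss]
  have hJ' : mInner (fun _ _ => 1) (Matrix.vecMulVec t t) = 0 := by
    simp only [mInner, Matrix.vecMulVec_apply, one_mul, ← Finset.mul_sum, hτ0]
    simp
  have split : ∀ Z, mInner (Wmat w E) Z =
      mInner (Wmat w E - condEW a b μ ν w σ) Z + mInner (condEW a b μ ν w σ) Z := by
    intro Z; rw [← mInner_add, sub_add_cancel]
  rw [split, split Y, mInner_condEW hn a b μ ν w σ _ hd hJ,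
    mInner_condEW hn a b μ ν w σ _ hd' hJ'] at hZ
  have g1 := groth_psd hM hY hd
  have g2 : -(5 * n * r) ≤ mInner (Wmat w E - condEW a b μ ν w σ) (Matrix.vecMulVec t t) := by
    have h := hM τ (fun u => !τ u)
    have : ∑ i, ∑ j, sg (τ i) * (Wmat w E - condEW a b μ ν w σ) i j * sg (!τ j) =
      - mInner (Wmat w E - condEW a b μ ν w σ) (Matrix.vecMulVec t t) := by
      unfold mInner
      rw [← Finset.sum_neg_distrib]
      refine Finset.sum_congr rfl fun i _ => ?_
      rw [← Finset.sum_neg_distrib]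
      refine Finset.sum_congr rfl fun j _ => ?_
      have e1 : sg (!τ j) = - t j := by
        simp only [sg, t, signVec]; cases τ j <;> simp
      have e2 : sg (τ i) = t i := rfl
      rw [e1, e2, Matrix.vecMulVec_apply]
      ring
    rw [this] at h
    linarith
  have hq : s ⬝ᵥ (Matrix.vecMulVec t t).mulVec s = (∑ u, s u * t u) ^ 2 := by
    rw [Matrix.vecMulVec_mulVec]
    simp only [op_smul_eq_smul, dotProduct_smul, smul_eq_mul, dotProduct_comm t s, pow_two]
    rfl
  rw [hq] at hZ
  have hΔe : ∑ ℓ, (a * μ ℓ - b * ν ℓ) * w ℓ =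
      a * (∑ ℓ, μ ℓ * w ℓ) - b * ∑ ℓ, ν ℓ * w ℓ := by
    rw [Finset.mul_sum, Finset.mul_sum, ← Finset.sum_sub_distrib]
    refine Finset.sum_congr rfl fun i _ => by ring
  rw [hΔe] at hΔ
  set Δ := a * (∑ ℓ, μ ℓ * w ℓ) - b * ∑ ℓ, ν ℓ * w ℓ
  set q := s ⬝ᵥ Y.mulVec s
  have hc : (19 / 20 * (n:ℝ)) ^ 2 ≤ (∑ u, s u * t u) ^ 2 := by
    apply pow_le_pow_left₀ (by positivity)
    linarith
  by_contra hcon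
  push Not at hcon
  set Q := (∑ u, s u * t u) ^ 2
  have h1 : Δ / (2 * n) * (Q - q) ≤ 6.07 * (5 * n * r) := by linarith
  have h2 : 0.1525 * (n:ℝ) ^ 2 ≤ Q - q := by nlinarith
  have h3 : (512 * r) / (2 * n) * (0.1525 * (n:ℝ) ^ 2) ≤ Δ / (2 * n) * (Q - q) := by
    apply mul_le_mul _ h2 (by positivity) (by apply div_nonneg <;> linarith)
    gcongr
  have h4 : (512 * r) / (2 * n) * (0.1525 * (n:ℝ) ^ 2) = 39.04 * (n * r) := by
    field_simp; norm_num
  have : 0 < n * r := by positivity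
  nlinarith

noncomputable def wO (w : L → ℝ) : Option L → ℝ
  | none => 0
  | some ℓ => w ℓ

noncomputable def mP (n : ℕ) [Fintype L] (a b : ℝ) (μ ν w : L → ℝ) (same : Bool) : ℝ :=
  if same then (a / n) * ∑ ℓ, μ ℓ * w ℓ else (b / n) * ∑ ℓ, ν ℓ * w ℓ

lemma sum_pairs {n : ℕ} (f : Fin n → Fin n → ℝ) (hf : ∀ u, f u u = 0) :
    ∑ u, ∑ v, f u v = ∑ p : Pairs n, (f p.1.1 p.1.2 + f p.1.2 p.1.1) := by
  have h1 : ∀ g : Fin n × Fin n → ℝ, ∑ p : Pairs n, g p.1 = ∑ u, ∑ v, if u < v then g (u, v) else 0 := by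
    intro g
    rw [← Fintype.sum_prod_type' (f := fun u v => if u < v then g (u, v) else 0)]
    rw [← Finset.sum_filter]
    symm
    exact Finset.sum_subtype _ (by simp) _
  rw [h1 (fun p => f p.1 p.2 + f p.2 p.1)]
  have h2 : ∀ u v : Fin n, f u v = (if u < v then f u v else 0) + (if v < u then f u v else 0) := by
    intro u v
    rcases lt_trichotomy u v with h | h | h
    · simp [h, h.not_gt]
    · subst h; simp [hf]
    · simp [h, h.not_gt]
  have h3 : ∑ u, ∑ v, f u v = ∑ u, ∑ v, ((if u < v then f u v else 0) + (if v < u then f u v else 0)) :=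
    Finset.sum_congr rfl fun u _ => Finset.sum_congr rfl fun v _ => h2 u v
  rw [h3]
  simp only [Finset.sum_add_distrib]
  rw [Finset.sum_comm (f := fun u v : Fin n => if v < u then f u v else 0),
    ← Finset.sum_add_distrib]
  refine Finset.sum_congr rfl fun u _ => ?_
  rw [← Finset.sum_add_distrib]
  refine Finset.sum_congr rfl fun v _ => ?_
  split_ifs <;> simp

lemma card_pairs {n : ℕ} : (Fintype.card (Pairs n) : ℝ) ≤ (n:ℝ) ^ 2 / 2 := by
  have h := sum_pairs (n := n) (fun u v => if u = v then 0 else 1) (by simp)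
  have h1 : ∑ p : Pairs n, ((if p.1.1 = p.1.2 then (0:ℝ) else 1) + (if p.1.2 = p.1.1 then 0 else 1))
      = ∑ p : Pairs n, 2 := by
    refine Finset.sum_congr rfl fun p _ => ?_
    rw [if_neg p.2.ne, if_neg p.2.ne']; norm_num
  rw [h1] at h
  have h2 : ∑ u : Fin n, ∑ v : Fin n, (if u = v then (0:ℝ) else 1) ≤ ∑ u : Fin n, ∑ v : Fin n, 1 := by
    refine Finset.sum_le_sum fun u _ => Finset.sum_le_sum fun v _ => ?_
    split_ifs <;> norm_num
  rw [h] at h2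
  simp only [Finset.sum_const, Finset.card_univ, nsmul_eq_mul, Fintype.card_fin] at h2
  nlinarith

lemma pairMass_sum [Fintype L] (n : ℕ) (a b : ℝ) (μ ν : L → ℝ) (hμ : IsProbVec μ)
    (hν : IsProbVec ν) (s : Bool) : ∑ o, sbmPairMass n a b μ ν s o = 1 := by
  rw [Fintype.sum_option]
  cases s <;> simp [sbmPairMass, ← Finset.mul_sum, hμ.2, hν.2]

lemma pairMass_nonneg [Fintype L] (n : ℕ) (hn : 0 < n) (a b : ℝ) (ha : 0 < a) (hb : 0 < b)
    (han : a ≤ n) (hbn : b ≤ n) (μ ν : L → ℝ) (hμ : IsProbVec μ)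
    (hν : IsProbVec ν) (s : Bool) (o : Option L) : 0 ≤ sbmPairMass n a b μ ν s o := by
  have hn' : (0:ℝ) < n := by exact_mod_cast hn
  have h1 : a / n ≤ 1 := (div_le_one hn').mpr han
  have h2 : b / n ≤ 1 := (div_le_one hn').mpr hbn
  cases o with
  | none => cases s <;> simp [sbmPairMass] <;> assumption
  | some l =>
    cases s
    · simp only [sbmPairMass]; exact mul_nonneg (by positivity) (hν.1 l)
    · simp only [sbmPairMass]; exact mul_nonneg (by positivity) (hμ.1 l)

lemma pair_mgf [Fintype L] (n : ℕ) (hn : 0 < n) (a b : ℝ) (ha : 0 < a) (hb : 0 < b)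
    (han : a ≤ n) (hbn : b ≤ n) (μ ν : L → ℝ) (hμ : IsProbVec μ)
    (hν : IsProbVec ν) (w : L → ℝ) (hw : ∀ ℓ, -1 ≤ w ℓ ∧ w ℓ ≤ 1) (s : Bool) (θ : ℝ)
    (hθ : |θ| ≤ 1) :
    ∑ o, sbmPairMass n a b μ ν s o * Real.exp (θ * (wO w o - mP n a b μ ν w s)) ≤
      Real.exp (θ ^ 2 * ((∑ ℓ, (a * μ ℓ + b * ν ℓ) * w ℓ ^ 2) / n)) := by
  have hn' : (0:ℝ) < n := by exact_mod_cast hn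
  set m := mP n a b μ ν w s with hm
  set v := (∑ ℓ, (a * μ ℓ + b * ν ℓ) * w ℓ ^ 2) / n with hv
  have e1 : ∑ o, sbmPairMass n a b μ ν s o * wO w o = m := by
    rw [Fintype.sum_option, hm]
    cases s <;> simp [sbmPairMass, wO, mP, Finset.mul_sum, mul_assoc]
  have e2 : ∑ o, sbmPairMass n a b μ ν s o * wO w o ^ 2 ≤ v := by
    rw [Fintype.sum_option, hv, Finset.sum_div]
    have : sbmPairMass n a b μ ν s none * wO w none ^ 2 = 0 := by simp [wO]
    rw [this, zero_add]
    refine Finset.sum_le_sum fun l _ => ?_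
    have h1 := hμ.1 l
    have h2 := hν.1 l
    cases s
    · simp only [sbmPairMass, wO]
      have : (a * μ l + b * ν l) * w l ^ 2 / n = b / n * ν l * w l ^ 2 + a * μ l * w l ^ 2 / n := by
        ring
      rw [this]
      simp
      positivity
    · simp only [sbmPairMass, wO]
      have : (a * μ l + b * ν l) * w l ^ 2 / n = a / n * μ l * w l ^ 2 + b * ν l * w l ^ 2 / n := by
        ring
      rw [this]
      simp
      positivity
  have e3 : ∀ o, Real.exp (θ * (wO w o - m)) ≤
      Real.exp (-(θ * m)) * (1 + θ * wO w o + θ ^ 2 * wO w o ^ 2) := by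
    intro o
    rw [mul_sub, sub_eq_add_neg, add_comm, Real.exp_add]
    apply mul_le_mul_of_nonneg_left _ (Real.exp_pos _).le
    have hw1 : |wO w o| ≤ 1 := by
      cases o with
      | none => simp [wO]
      | some l => exact abs_le.mpr (hw l)
    have hz : |θ * wO w o| ≤ 1 := by
      rw [abs_mul]; exact mul_le_one₀ hθ (abs_nonneg _) hw1
    have := (abs_le.mp (Real.abs_exp_sub_one_sub_id_le hz)).2
    rw [mul_pow] at this
    linarith
  calc _ ≤ ∑ o, sbmPairMass n a b μ ν s o *
        (Real.exp (-(θ * m)) * (1 + θ * wO w o + θ ^ 2 * wO w o ^ 2)) :=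
        Finset.sum_le_sum fun o _ => mul_le_mul_of_nonneg_left (e3 o)
          (pairMass_nonneg n hn a b ha hb han hbn μ ν hμ hν s o)
    _ = Real.exp (-(θ * m)) * (∑ o, sbmPairMass n a b μ ν s o +
        θ * ∑ o, sbmPairMass n a b μ ν s o * wO w o +
        θ ^ 2 * ∑ o, sbmPairMass n a b μ ν s o * wO w o ^ 2) := by
        rw [Finset.mul_sum, Finset.mul_sum, ← Finset.sum_add_distrib, ← Finset.sum_add_distrib,
          Finset.mul_sum]
        refine Finset.sum_congr rfl fun o _ => by ring
    _ ≤ Real.exp (-(θ * m)) * (θ * m + θ ^ 2 * v + 1) := by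
        rw [pairMass_sum n a b μ ν hμ hν, e1]
        apply mul_le_mul_of_nonneg_left _ (Real.exp_pos _).le
        have := mul_le_mul_of_nonneg_left e2 (sq_nonneg θ)
        linarith
    _ ≤ Real.exp (-(θ * m)) * Real.exp (θ * m + θ ^ 2 * v) :=
        mul_le_mul_of_nonneg_left (Real.add_one_le_exp _) (Real.exp_pos _).le
    _ = _ := by rw [← Real.exp_add]; congr 1; ring

lemma X_eq {n : ℕ} [Fintype L] (a b : ℝ) (μ ν w : L → ℝ)
    (σ : Fin n → Bool) (E : EdgeConf n L) (x y : Fin n → Bool) :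
    ∑ i, ∑ j, sg (x i) * (Wmat w E - condEW a b μ ν w σ) i j * sg (y j) =
    ∑ p : Pairs n, (sg (x p.1.1) * sg (y p.1.2) + sg (x p.1.2) * sg (y p.1.1)) *
      (wO w (E p) - mP n a b μ ν w (σ p.1.1 == σ p.1.2)) := by
  rw [sum_pairs]
  · refine Finset.sum_congr rfl fun p _ => ?_
    obtain ⟨⟨u, v⟩, huv⟩ := p
    simp only at huv
    have h1 : Wmat w E u v = wO w (E ⟨(u, v), huv⟩) := by
      unfold Wmat wO getLabel
      simp only [huv, dite_true]
    have h2 : Wmat w E v u = wO w (E ⟨(u, v), huv⟩) := by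
      unfold Wmat wO getLabel
      simp only [huv, huv.not_gt, dite_true, dite_false]
    have h3 : condEW a b μ ν w σ u v = mP n a b μ ν w (σ u == σ v) := by
      simp [condEW, mP, huv.ne]
    have h4 : condEW a b μ ν w σ v u = mP n a b μ ν w (σ u == σ v) := by
      have hsy : (σ v = σ u) ↔ (σ u = σ v) := eq_comm
      simp [condEW, mP, huv.ne', hsy]
    simp only [Matrix.sub_apply, h1, h2, h3, h4]
    ring
  · intro u
    simp [Wmat, getLabel, condEW]

lemma mgf_total [Fintype L] (n : ℕ) (hn : 0 < n) (a b : ℝ) (ha : 0 < a) (hb : 0 < b)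
    (han : a ≤ n) (hbn : b ≤ n) (μ ν : L → ℝ) (hμ : IsProbVec μ)
    (hν : IsProbVec ν) (w : L → ℝ) (hw : ∀ ℓ, -1 ≤ w ℓ ∧ w ℓ ≤ 1)
    (σ x y : Fin n → Bool) (lm : ℝ) (hl0 : 0 ≤ lm) (hl : lm ≤ 1 / 2)  :
    ∑ E : EdgeConf n L, (∏ p : Pairs n, sbmPairMass n a b μ ν (σ p.1.1 == σ p.1.2) (E p)) *
      Real.exp (lm * ∑ i, ∑ j, sg (x i) * (Wmat w E - condEW a b μ ν w σ) i j * sg (y j)) ≤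
    Real.exp (2 * lm ^ 2 * (∑ ℓ, (a * μ ℓ + b * ν ℓ) * w ℓ ^ 2) * n) := by
  classical
  have hn' : (0:ℝ) < n := by exact_mod_cast hn
  set S := ∑ ℓ, (a * μ ℓ + b * ν ℓ) * w ℓ ^ 2 with hS
  have hS0 : 0 ≤ S := Finset.sum_nonneg fun l _ => by
    have := hμ.1 l
    have := hν.1 l
    positivity
  set c : Pairs n → ℝ := fun p => sg (x p.1.1) * sg (y p.1.2) + sg (x p.1.2) * sg (y p.1.1) with hc
  have hc2 : ∀ p, |c p| ≤ 2 := by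
    intro p
    simp only [hc, sg]
    split_ifs <;> norm_num
  have e : ∀ E : EdgeConf n L, (∏ p : Pairs n, sbmPairMass n a b μ ν (σ p.1.1 == σ p.1.2) (E p)) *
      Real.exp (lm * ∑ i, ∑ j, sg (x i) * (Wmat w E - condEW a b μ ν w σ) i j * sg (y j)) =
      ∏ p : Pairs n, (sbmPairMass n a b μ ν (σ p.1.1 == σ p.1.2) (E p) *
        Real.exp ((lm * c p) * (wO w (E p) - mP n a b μ ν w (σ p.1.1 == σ p.1.2)))) := by
    intro E
    rw [Finset.prod_mul_distrib, X_eq, Finset.mul_sum, Real.exp_sum]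
    simp only [hc, mul_assoc]
  simp only [e]
  rw [← Fintype.prod_sum (fun (p : Pairs n) (o : Option L) =>
    sbmPairMass n a b μ ν (σ p.1.1 == σ p.1.2) o *
        Real.exp ((lm * c p) * (wO w o - mP n a b μ ν w (σ p.1.1 == σ p.1.2))))]
  calc _ ≤ ∏ p : Pairs n, Real.exp (4 * lm ^ 2 * (S / n)) := by
        refine Finset.prod_le_prod (fun p _ => Finset.sum_nonneg fun o _ => mul_nonneg
          (pairMass_nonneg n hn a b ha hb han hbn μ ν hμ hν _ o) (Real.exp_pos _).le) fun p _ => ?_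
        refine (pair_mgf n hn a b ha hb han hbn μ ν hμ hν w hw _ _ ?_).trans ?_
        · rw [abs_mul, abs_of_nonneg hl0]
          nlinarith [hc2 p, abs_nonneg (c p)]
        · apply Real.exp_le_exp.mpr
          apply mul_le_mul_of_nonneg_right _ (by positivity)
          have : c p ^ 2 ≤ 4 := by
            rw [← sq_abs]; nlinarith [hc2 p, abs_nonneg (c p)]
          rw [mul_pow]
          nlinarith [sq_nonneg lm]
    _ = Real.exp (Fintype.card (Pairs n) * (4 * lm ^ 2 * (S / n))) := by
        rw [Finset.prod_const, ← Real.exp_nat_mul]; rfl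
    _ ≤ _ := by
        apply Real.exp_le_exp.mpr
        calc _ ≤ (n:ℝ) ^ 2 / 2 * (4 * lm ^ 2 * (S / n)) :=
              mul_le_mul_of_nonneg_right card_pairs (by positivity)
          _ = _ := by field_simp; ring

lemma mass_sum_E [Fintype L] (n : ℕ) (a b : ℝ) (μ ν : L → ℝ) (hμ : IsProbVec μ)
    (hν : IsProbVec ν) (σ : Fin n → Bool) :
    ∑ E : EdgeConf n L, ∏ p : Pairs n, sbmPairMass n a b μ ν (σ p.1.1 == σ p.1.2) (E p) = 1 := by
  classical
  rw [← Fintype.prod_sum (fun (p : Pairs n) (o : Option L) =>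
    sbmPairMass n a b μ ν (σ p.1.1 == σ p.1.2) o)]
  simp [pairMass_sum n a b μ ν hμ hν]

lemma mass_sum [Fintype L] (n : ℕ) (a b : ℝ) (μ ν : L → ℝ) (hμ : IsProbVec μ)
    (hν : IsProbVec ν) : ∑ x : (Fin n → Bool) × EdgeConf n L, sbmMass n a b μ ν x = 1 := by
  rw [Fintype.sum_prod_type]
  simp only [sbmMass, ← Finset.mul_sum, mass_sum_E n a b μ ν hμ hν]
  simp

lemma sum_sq (n : ℕ) : ∑ σ : Fin n → Bool, (∑ u, signVec σ u) ^ 2 = 2 ^ n * n := by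
  have h := rad_mul n (fun _ => 1) (fun _ => 1)
  simp only [rad, one_mul, ← pow_two] at h
  have : ∀ (σ : Fin n → Bool) u, signVec σ u = sg (σ u) := fun _ _ => rfl
  simp only [this, h]
  simp

/-- Main quantitative bound. -/
lemma prob_bound [Fintype L] (n : ℕ) (hn : 0 < n) (a b : ℝ) (ha : 0 < a) (hb : 0 < b)
    (han : a ≤ n) (hbn : b ≤ n) (μ ν : L → ℝ) (hμ : IsProbVec μ)
    (hν : IsProbVec ν) (w : L → ℝ) (hw : ∀ ℓ, -1 ≤ w ℓ ∧ w ℓ ≤ 1)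
    (lm r : ℝ) (hl0 : 0 < lm) (hl : lm ≤ 1 / 2)
    (hlS : lm ^ 2 * (∑ ℓ, (a * μ ℓ + b * ν ℓ) * w ℓ ^ 2) = Real.log 2)
    (hlr : lm * r = Real.log 2)
    (A : Set ((Fin n → Bool) × EdgeConf n L))
    (hA : ∀ σ E, |∑ u, signVec σ u| ≤ n / 20 →
      (∀ x y : Fin n → Bool, ∑ i, ∑ j, sg (x i) *
      (Wmat w E - condEW a b μ ν w σ) i j * sg (y j) ≤ 5 * n * r) → (σ, E) ∈ A) :
    1 - (400 / n + (1 / 2) ^ n) ≤ sbmProb n a b μ ν A ∧ sbmProb n a b μ ν A ≤ 1 := by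
  classical
  have hn' : (0:ℝ) < n := by exact_mod_cast hn
  have hm0 : ∀ x, 0 ≤ sbmMass n a b μ ν x := fun x => mul_nonneg (by positivity)
    (Finset.prod_nonneg fun p _ => pairMass_nonneg n hn a b ha hb han hbn μ ν hμ hν _ _)
  have hm1 := mass_sum n a b μ ν hμ hν
  constructor
  swap
  · rw [← hm1]
    exact Finset.sum_le_sum fun x _ => Set.indicator_le_self' (fun _ _ => hm0 _) _
  set X : (Fin n → Bool) → EdgeConf n L → (Fin n → Bool) → (Fin n → Bool) → ℝ :=
    fun σ E x y => ∑ i, ∑ j, sg (x i) * (Wmat w E - condEW a b μ ν w σ) i j * sg (y j) with hX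
  set F : (Fin n → Bool) × EdgeConf n L → ℝ := fun z =>
    400 / n ^ 2 * (∑ u, signVec z.1 u) ^ 2 + ∑ x, ∑ y,
      Real.exp (-(5 * n * Real.log 2)) * Real.exp (lm * X z.1 z.2 x y) with hF
  have hF1 : ∀ z, sbmMass n a b μ ν z - A.indicator (sbmMass n a b μ ν) z ≤
      sbmMass n a b μ ν z * F z := by
    rintro ⟨σ, E⟩
    have p1 : 0 ≤ 400 / (n:ℝ) ^ 2 * (∑ u, signVec σ u) ^ 2 := by positivity
    have p2 : ∀ x y, 0 ≤ Real.exp (-(5 * n * Real.log 2)) * Real.exp (lm * X σ E x y) :=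
      fun x y => by positivity
    have p3 : 0 ≤ ∑ x, ∑ y, Real.exp (-(5 * n * Real.log 2)) * Real.exp (lm * X σ E x y) :=
      Finset.sum_nonneg fun x _ => Finset.sum_nonneg fun y _ => p2 x y
    by_cases hz : (σ, E) ∈ A
    · rw [Set.indicator_of_mem hz, sub_self]
      exact mul_nonneg (hm0 _) (add_nonneg p1 p3)
    · rw [Set.indicator_of_notMem hz, sub_zero]
      suffices h : 1 ≤ F (σ, E) by nlinarith [hm0 (σ, E)]
      show 1 ≤ 400 / (n:ℝ) ^ 2 * (∑ u, signVec σ u) ^ 2 +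
        ∑ x, ∑ y, Real.exp (-(5 * n * Real.log 2)) * Real.exp (lm * X σ E x y)
      by_cases hbal : |∑ u, signVec σ u| ≤ n / 20
      · have := mt (hA σ E hbal) hz
        push Not at this
        obtain ⟨x, y, hxy⟩ := this
        have h1 : 1 ≤ Real.exp (-(5 * n * Real.log 2)) * Real.exp (lm * X σ E x y) := by
          rw [← Real.exp_add]
          apply Real.one_le_exp
          have : lm * (5 * n * r) ≤ lm * X σ E x y := mul_le_mul_of_nonneg_left hxy.le hl0.le
          have e : lm * (5 * n * r) = 5 * n * Real.log 2 := by rw [← hlr]; ring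
          linarith
        have h2 := Finset.single_le_sum (f := fun x => ∑ y, Real.exp (-(5 * n * Real.log 2)) *
          Real.exp (lm * X σ E x y)) (fun x _ => Finset.sum_nonneg fun y _ => p2 x y)
          (Finset.mem_univ x)
        have h3 := Finset.single_le_sum (f := fun y => Real.exp (-(5 * n * Real.log 2)) *
          Real.exp (lm * X σ E x y)) (fun y _ => p2 x y) (Finset.mem_univ y)
        linarith
      · push Not at hbal
        have h1 : ((n:ℝ) / 20) ^ 2 ≤ (∑ u, signVec σ u) ^ 2 := by
          rw [← sq_abs (∑ u, signVec σ u)]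
          exact pow_le_pow_left₀ (by positivity) hbal.le 2
        have h2 : 400 / (n:ℝ) ^ 2 * ((n:ℝ) / 20) ^ 2 = 1 := by field_simp; norm_num
        have h3 := mul_le_mul_of_nonneg_left h1 (show 0 ≤ 400 / (n:ℝ) ^ 2 by positivity)
        linarith
  have hF2 : ∑ z, sbmMass n a b μ ν z * F z ≤ 400 / n + (1 / 2) ^ n := by
    have e1 : ∀ σ : Fin n → Bool, ∑ E : EdgeConf n L, sbmMass n a b μ ν (σ, E) * F (σ, E) =
        (1 / 2) ^ n * (400 / n ^ 2 * (∑ u, signVec σ u) ^ 2) +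
        (1 / 2) ^ n * ∑ x, ∑ y, Real.exp (-(5 * n * Real.log 2)) *
          ∑ E : EdgeConf n L, (∏ p : Pairs n, sbmPairMass n a b μ ν (σ p.1.1 == σ p.1.2) (E p)) *
            Real.exp (lm * X σ E x y) := by
      intro σ
      have : ∀ E : EdgeConf n L, sbmMass n a b μ ν (σ, E) * F (σ, E) =
          (1 / 2) ^ n * (400 / n ^ 2 * (∑ u, signVec σ u) ^ 2) *
            (∏ p : Pairs n, sbmPairMass n a b μ ν (σ p.1.1 == σ p.1.2) (E p)) +
          (1 / 2) ^ n * ∑ x, ∑ y, Real.exp (-(5 * n * Real.log 2)) *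
            ((∏ p : Pairs n, sbmPairMass n a b μ ν (σ p.1.1 == σ p.1.2) (E p)) *
              Real.exp (lm * X σ E x y)) := by
        intro E
        have : ∑ x, ∑ y, Real.exp (-(5 * n * Real.log 2)) *
            ((∏ p : Pairs n, sbmPairMass n a b μ ν (σ p.1.1 == σ p.1.2) (E p)) *
              Real.exp (lm * X σ E x y)) =
            (∏ p : Pairs n, sbmPairMass n a b μ ν (σ p.1.1 == σ p.1.2) (E p)) *
            ∑ x, ∑ y, Real.exp (-(5 * n * Real.log 2)) * Real.exp (lm * X σ E x y) := by
          simp only [Finset.mul_sum]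
          refine Finset.sum_congr rfl fun x _ => Finset.sum_congr rfl fun y _ => by ring
        rw [this]
        simp only [sbmMass, hF]
        ring
      simp only [this, Finset.sum_add_distrib]
      rw [← Finset.mul_sum, mass_sum_E n a b μ ν hμ hν, mul_one, ← Finset.mul_sum]
      congr 2
      rw [Finset.sum_comm]
      refine Finset.sum_congr rfl fun x _ => ?_
      rw [Finset.sum_comm]
      refine Finset.sum_congr rfl fun y _ => ?_
      rw [Finset.mul_sum]
    have e2 : ∀ σ : Fin n → Bool, ∑ x : Fin n → Bool, ∑ y : Fin n → Bool,
        Real.exp (-(5 * n * Real.log 2)) *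
          ∑ E : EdgeConf n L, (∏ p : Pairs n, sbmPairMass n a b μ ν (σ p.1.1 == σ p.1.2) (E p)) *
            Real.exp (lm * X σ E x y) ≤ (1 / 2) ^ n := by
      intro σ
      calc _ ≤ ∑ x : Fin n → Bool, ∑ y : Fin n → Bool,
          Real.exp (-(5 * n * Real.log 2)) * Real.exp (2 * n * Real.log 2) := by
            refine Finset.sum_le_sum fun x _ => Finset.sum_le_sum fun y _ => ?_
            apply mul_le_mul_of_nonneg_left _ (Real.exp_pos _).le
            refine (mgf_total n hn a b ha hb han hbn μ ν hμ hν w hw σ x y lm hl0.le hl).trans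
              (le_of_eq ?_)
            congr 1
            rw [← hlS]; ring
        _ = _ := by
            rw [← Real.exp_add]
            have : -(5 * (n:ℝ) * Real.log 2) + 2 * n * Real.log 2 = -(n * (3 * Real.log 2)) := by ring
            rw [this, Real.exp_neg, Real.exp_nat_mul]
            have : Real.exp (3 * Real.log 2) = 8 := by
              rw [show (3:ℝ) * Real.log 2 = (3:ℕ) * Real.log 2 by norm_num, Real.exp_nat_mul,
                Real.exp_log (by norm_num)]
              norm_num
            rw [this]
            simp only [Finset.sum_const, Finset.card_univ, Fintype.card_fun, Fintype.card_bool,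
              Fintype.card_fin, nsmul_eq_mul, Nat.cast_pow, Nat.cast_ofNat]
            rw [← inv_pow, ← mul_pow, ← mul_pow]
            norm_num
    rw [Fintype.sum_prod_type]
    simp only [e1, Finset.sum_add_distrib, ← Finset.mul_sum, sum_sq]
    have h1 : (1 / 2 : ℝ) ^ n * (400 / (n:ℝ) ^ 2 * (2 ^ n * n)) = 400 / n := by
      have : (1 / 2 : ℝ) ^ n * 2 ^ n = 1 := by rw [← mul_pow]; norm_num
      calc _ = ((1 / 2 : ℝ) ^ n * 2 ^ n) * (400 / (n:ℝ) ^ 2 * n) := by ring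
        _ = _ := by rw [this]; field_simp
    rw [h1]
    have h2 := Finset.sum_le_sum fun (σ : Fin n → Bool) (_ : σ ∈ univ) => e2 σ
    have h3 : ∑ σ : Fin n → Bool, (1 / 2 : ℝ) ^ n = 1 := by
      simp
    rw [h3] at h2
    have h4 := mul_le_mul_of_nonneg_left h2 (show (0:ℝ) ≤ (1 / 2) ^ n by positivity)
    simp only [← Finset.mul_sum] at h4
    linarith
  have hF3 := Finset.sum_le_sum fun z (_ : z ∈ univ) => hF1 z
  rw [Finset.sum_sub_distrib, hm1] at hF3
  unfold sbmProb
  linarith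

/-- **Theorem (Semidefinite relaxation, Theorem 2).**
Under the labeled SBM with a weight function `w : 𝓛 → [-1,1]`, the stated technical
condition and the gap condition, a.a.s.: for every maximizer `Y` of `⟨W, Y⟩` over
`{Y ⪰ 0, Y_{uu} = 1, ⟨J, Y⟩ = 0}` and every eigenvector `y` of `Y` for its largest
eigenvalue with `‖y‖ = √n`, the assignment `sign(y)` has positive overlap with the
true type assignment. -/
theorem sdp_correlated
    {L : Type*} [Fintype L] (a b : ℝ) (ha : 0 < a) (hb : 0 < b)
    (μ ν : L → ℝ) (hμ : IsProbVec μ) (hν : IsProbVec ν)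
    (w : L → ℝ) (hw : ∀ ℓ, -1 ≤ w ℓ ∧ w ℓ ≤ 1)
    (htech : 8 * Real.log 2 < ∑ ℓ, w ℓ ^ 2 * (a * μ ℓ + b * ν ℓ))
    (hgap : 512 * Real.sqrt (Real.log 2) <
      (∑ ℓ, (a * μ ℓ - b * ν ℓ) * w ℓ) /
        Real.sqrt (∑ ℓ, (a * μ ℓ + b * ν ℓ) * w ℓ ^ 2)) :
    Filter.Tendsto (fun n : ℕ =>
      sbmProb n a b μ ν
        {x | ∀ Y : Matrix (Fin n) (Fin n) ℝ,
          Y.PosSemidef → (∀ u, Y u u = 1) → mInner (fun _ _ => 1) Y = 0 →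
          (∀ Z : Matrix (Fin n) (Fin n) ℝ,
            Z.PosSemidef → (∀ u, Z u u = 1) → mInner (fun _ _ => 1) Z = 0 →
            mInner (Wmat w x.2) Z ≤ mInner (Wmat w x.2) Y) →
          ∀ (y : Fin n → ℝ) (lam : ℝ),
            Y.mulVec y = lam • y →
            (∀ (lam' : ℝ) (z : Fin n → ℝ), z ≠ 0 → Y.mulVec z = lam' • z → lam' ≤ lam) →
            (∑ u, y u ^ 2) = n →
            0 < overlap n (signVec x.1) (signR y)})
      Filter.atTop (nhds 1) := by
  have hlog : 0 < Real.log 2 := Real.log_pos (by norm_num)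
  set S := ∑ ℓ, (a * μ ℓ + b * ν ℓ) * w ℓ ^ 2 with hS
  have hSe : ∑ ℓ, w ℓ ^ 2 * (a * μ ℓ + b * ν ℓ) = S :=
    Finset.sum_congr rfl fun l _ => mul_comm _ _
  rw [hSe] at htech
  have hS0 : 0 < S := by linarith
  have hsS : 0 < Real.sqrt S := Real.sqrt_pos.mpr hS0
  have hsl : 0 < Real.sqrt (Real.log 2) := Real.sqrt_pos.mpr hlog
  have qS : Real.sqrt S ^ 2 = S := Real.sq_sqrt hS0.le
  have ql : Real.sqrt (Real.log 2) ^ 2 = Real.log 2 := Real.sq_sqrt hlog.le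
  set r := Real.sqrt (Real.log 2) * Real.sqrt S with hr
  set lm := Real.sqrt (Real.log 2) / Real.sqrt S with hlm
  have hr0 : 0 < r := by positivity
  have hl0 : 0 < lm := by positivity
  have hlS : lm ^ 2 * S = Real.log 2 := by
    rw [hlm, div_pow, qS, ql]; field_simp
  have hlr : lm * r = Real.log 2 := by
    rw [hlm, hr]; field_simp; exact ql
  have hl : lm ≤ 1 / 2 := by
    by_contra hc
    push Not at hc
    have : 1 / 4 ≤ lm ^ 2 := by nlinarith
    nlinarith
  have hΔ : 512 * r < ∑ ℓ, (a * μ ℓ - b * ν ℓ) * w ℓ := by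
    rw [lt_div_iff₀ hsS] at hgap
    rw [hr]; linarith
  obtain ⟨N, hN⟩ := exists_nat_ge (max a b)
  have lim : Tendsto (fun n : ℕ => 1 - (400 / (n:ℝ) + (1 / 2 : ℝ) ^ n)) atTop (nhds 1) := by
    have h1 : Tendsto (fun n : ℕ => 400 / (n:ℝ)) atTop (nhds 0) :=
      tendsto_const_div_atTop_nhds_zero_nat 400
    have h2 : Tendsto (fun n : ℕ => (1 / 2 : ℝ) ^ n) atTop (nhds 0) :=
      tendsto_pow_atTop_nhds_zero_of_lt_one (by norm_num) (by norm_num)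
    simpa using (h1.add h2).const_sub 1
  have ev : ∀ᶠ n : ℕ in atTop, N ≤ n ∧ 0 < n :=
    (eventually_ge_atTop N).and (eventually_gt_atTop 0)
  have main := fun (n : ℕ) (h : N ≤ n ∧ 0 < n) =>
    have hNn : (N:ℝ) ≤ n := by exact_mod_cast h.1
    prob_bound n h.2 a b ha hb (((le_max_left a b).trans hN).trans hNn)
      (((le_max_right a b).trans hN).trans hNn) μ ν hμ hν w hw lm r hl0 hl hlS hlr
      {x | ∀ Y : Matrix (Fin n) (Fin n) ℝ,
          Y.PosSemidef → (∀ u, Y u u = 1) → mInner (fun _ _ => 1) Y = 0 →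
          (∀ Z : Matrix (Fin n) (Fin n) ℝ,
            Z.PosSemidef → (∀ u, Z u u = 1) → mInner (fun _ _ => 1) Z = 0 →
            mInner (Wmat w x.2) Z ≤ mInner (Wmat w x.2) Y) →
          ∀ (y : Fin n → ℝ) (lam : ℝ),
            Y.mulVec y = lam • y →
            (∀ (lam' : ℝ) (z : Fin n → ℝ), z ≠ 0 → Y.mulVec z = lam' • z → lam' ≤ lam) →
            (∑ u, y u ^ 2) = n →
            0 < overlap n (signVec x.1) (signR y)}
      (fun σ E hbal hM Y hY hd hJ hopt y lam he hlam hy =>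
        det_part h.2 a b μ ν w σ E r hr0 hΔ hbal hM Y hY hd hJ hopt y lam he hlam hy)
  exact tendsto_of_tendsto_of_tendsto_of_le_of_le' lim tendsto_const_nhds
    (ev.mono fun n h => (main n h).1) (ev.mono fun n h => (main n h).2)

end LSBM
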